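/- arXiv:2509.21547 — 2 statements merged into one kernel-verified Lean document; each statement's English description precedes it below -/
import Mathlib

section
/- Let Z_1, …, Z_n be independent real-valued random variables, each bounded above by 1 almost surely. Then for any λ ∈ (0, 1/2] and δ ∈ (0,1), the probability that (1/n) Σ_{i=1}^n E[Z_i] ≥ (1/n) Σ_{i=1}^n Z_i + (λ/n) Σ_{i=1}^n Z_i² + ln(1/δ)/(λn) is at most δ. -/
open MeasureTheory ProbabilityTheory

/-!
The elementary inequality `exp (-x - x²) ≤ 1 - x`, valid for `x ≤ 1/2`, shows after taking
expectations that a random variable `X ≤ 1/2` satisfies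
`E[exp (-X - X²)] ≤ 1 - E[X] ≤ exp (-E[X])`. No second moment is needed, since `-x - x²` is bounded
above. By independence these bounds multiply, and the Chernoff method applied to
`∑ᵢ (-Xᵢ - Xᵢ²)` with `Xᵢ = λ Zᵢ` yields the tail bound.
-/

lemma one_le_one_sub_mul_exp_add_sq {x : ℝ} (hx : x ≤ 1 / 2) :
    1 ≤ (1 - x) * Real.exp (x + x ^ 2) := by
  have one_sub_nonneg : 0 ≤ 1 - x := by linarith
  rcases le_total 0 x with x_nonneg | x_nonpos
  · have cubic_nonneg : 0 ≤ 1 - x - x ^ 2 - x ^ 3 := by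
      have sq_le : x ^ 2 ≤ (1 / 2) ^ 2 := by gcongr
      have cube_le : x ^ 3 ≤ (1 / 2) ^ 3 := by gcongr
      linarith
    calc 1 ≤ 1 + x ^ 2 / 2 * (1 - x - x ^ 2 - x ^ 3) := le_add_of_nonneg_right (by positivity)
      _ = (1 - x) * (1 + (x + x ^ 2) + (x + x ^ 2) ^ 2 / 2) := by ring
      _ ≤ (1 - x) * Real.exp (x + x ^ 2) := by
        gcongr
        exact Real.quadratic_le_exp_of_nonneg (by positivity)
  · have cube_nonpos : x ^ 3 ≤ 0 := Odd.pow_nonpos (by decide) x_nonpos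
    calc 1 ≤ 1 - x ^ 3 := by linarith
      _ = (1 - x) * (x + x ^ 2 + 1) := by ring
      _ ≤ (1 - x) * Real.exp (x + x ^ 2) := by
        gcongr
        exact Real.add_one_le_exp _

lemma exp_neg_sub_sq_le_one_sub {x : ℝ} (hx : x ≤ 1 / 2) : Real.exp (-x - x ^ 2) ≤ 1 - x := by
  rw [← neg_add', Real.exp_neg, inv_le_iff_one_le_mul₀ (Real.exp_pos _)]
  exact one_le_one_sub_mul_exp_add_sq hx

section

variable {Ω ι : Type*} [MeasurableSpace Ω] {μ : Measure Ω}

lemma integrable_exp_neg_sub_sq [IsFiniteMeasure μ] {X : Ω → ℝ} (hX : AEMeasurable X μ) :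
    Integrable (fun ω ↦ Real.exp (-X ω - X ω ^ 2)) μ := by
  refine .of_bound (by fun_prop) (Real.exp (1 / 4)) (ae_of_all _ fun ω ↦ ?_)
  rw [Real.norm_eq_abs, Real.abs_exp, Real.exp_le_exp]
  linarith [sq_nonneg (X ω + 1 / 2)]

lemma integral_exp_neg_sub_sq_le_exp_neg_integral [IsProbabilityMeasure μ] {X : Ω → ℝ}
    (hX : Integrable X μ) (hX_le : ∀ᵐ ω ∂μ, X ω ≤ 1 / 2) :
    ∫ ω, Real.exp (-X ω - X ω ^ 2) ∂μ ≤ Real.exp (-∫ ω, X ω ∂μ) :=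
  calc ∫ ω, Real.exp (-X ω - X ω ^ 2) ∂μ
      ≤ ∫ ω, (1 - X ω) ∂μ :=
        integral_mono_ae (integrable_exp_neg_sub_sq hX.aemeasurable) ((integrable_const 1).sub hX)
          (hX_le.mono fun _ ↦ exp_neg_sub_sq_le_one_sub)
    _ = 1 - ∫ ω, X ω ∂μ := by rw [integral_sub (integrable_const 1) hX]; simp
    _ ≤ Real.exp (-∫ ω, X ω ∂μ) := Real.one_sub_le_exp_neg _

lemma measureReal_sum_ge_le_exp_mul_prod_mgf {Y : ι → Ω → ℝ} (hindep : iIndepFun Y μ)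
    (hY : ∀ i, AEMeasurable (Y i) μ) {s : Finset ι} {t : ℝ} (ht : 0 ≤ t)
    (hint : ∀ i ∈ s, Integrable (fun ω ↦ Real.exp (t * Y i ω)) μ) (ε : ℝ) :
    μ.real {ω | ε ≤ ∑ i ∈ s, Y i ω} ≤ Real.exp (-t * ε) * ∏ i ∈ s, mgf (Y i) μ t := by
  have := hindep.isProbabilityMeasure
  have mgf_sum : mgf (∑ i ∈ s, Y i) μ t = ∏ i ∈ s, mgf (Y i) μ t := hindep.mgf_sum₀ hY s
  -- A nonzero Bochner integral certifies integrability.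
  have integrable_exp_sum : Integrable (fun ω ↦ Real.exp (t * (∑ i ∈ s, Y i) ω)) μ := by
    rw [← mgf_pos_iff, mgf_sum]
    exact Finset.prod_pos fun i hi ↦ mgf_pos (hint i hi)
  simpa only [Finset.sum_apply, mgf_sum] using measure_ge_le_exp_mul_mgf ε ht integrable_exp_sum

theorem measureReal_sum_add_sq_add_le_sum_integral_le_exp_neg [Fintype ι] {X : ι → Ω → ℝ}
    (hindep : iIndepFun X μ) (hX : ∀ i, Integrable (X i) μ)
    (hX_le : ∀ i, ∀ᵐ ω ∂μ, X i ω ≤ 1 / 2) (t : ℝ) :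
    μ.real {ω | ∑ i, (X i ω + X i ω ^ 2) + t ≤ ∑ i, ∫ ω', X i ω' ∂μ} ≤ Real.exp (-t) := by
  have := hindep.isProbabilityMeasure
  set m : ℝ := ∑ i, ∫ ω, X i ω ∂μ
  let Y : ι → Ω → ℝ := fun i ω ↦ -X i ω - X i ω ^ 2
  have hY_indep : iIndepFun Y μ := hindep.comp (fun _ x ↦ -x - x ^ 2) fun _ ↦ by fun_prop
  have hY : ∀ i, AEMeasurable (Y i) μ := fun i ↦ by have := (hX i).aemeasurable; fun_prop
  have integrable_exp : ∀ i, Integrable (fun ω ↦ Real.exp (1 * Y i ω)) μ := fun i ↦ by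
    simpa only [one_mul] using integrable_exp_neg_sub_sq (hX i).aemeasurable
  have mgf_le : ∀ i, mgf (Y i) μ 1 ≤ Real.exp (-∫ ω, X i ω ∂μ) := fun i ↦ by
    simpa only [mgf, one_mul] using integral_exp_neg_sub_sq_le_exp_neg_integral (hX i) (hX_le i)
  have event_eq : {ω | ∑ i, (X i ω + X i ω ^ 2) + t ≤ m} = {ω | t - m ≤ ∑ i, Y i ω} := by
    ext ω
    have sum_Y : ∑ i, Y i ω = -∑ i, (X i ω + X i ω ^ 2) := by
      simp only [Y, ← neg_add', Finset.sum_neg_distrib]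
    rw [Set.mem_ofPred_eq, Set.mem_ofPred_eq, sum_Y]
    constructor <;> intro h <;> linarith
  calc μ.real {ω | ∑ i, (X i ω + X i ω ^ 2) + t ≤ m}
      = μ.real {ω | t - m ≤ ∑ i, Y i ω} := by rw [event_eq]
    _ ≤ Real.exp (-1 * (t - m)) * ∏ i, mgf (Y i) μ 1 :=
        measureReal_sum_ge_le_exp_mul_prod_mgf hY_indep hY zero_le_one
          (fun i _ ↦ integrable_exp i) _
    _ ≤ Real.exp (-1 * (t - m)) * ∏ i, Real.exp (-∫ ω, X i ω ∂μ) := by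
        gcongr with i
        · exact fun _ _ ↦ mgf_nonneg
        · exact mgf_le i
    _ = Real.exp (-t) := by
        rw [← Real.exp_sum, Finset.sum_neg_distrib, ← Real.exp_add]
        congr 1
        ring

end

/-- Let `Z_1, …, Z_n` be independent random variables, each bounded above by 1 almost
surely. Then for any `λ ∈ (0, 1/2]` and `δ ∈ (0,1)`, with probability at most `δ`,
`(1/n) Σᵢ E[Zᵢ] ≥ (1/n) Σᵢ Zᵢ + (λ/n) Σᵢ Zᵢ² + ln(1/δ)/(λn)`. -/
theorem unexpected_bernstein_fixed_lambda
    {Ω : Type*} [MeasurableSpace Ω] (μ : Measure Ω) [IsProbabilityMeasure μ]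
    (n : ℕ) (hn : 0 < n) (Z : Fin n → Ω → ℝ)
    (hZmeas : ∀ i, Measurable (Z i))
    (hindep : iIndepFun Z μ)
    (hZle : ∀ i, ∀ᵐ ω ∂μ, Z i ω ≤ 1)
    (hZint : ∀ i, Integrable (Z i) μ)
    (lam : ℝ) (hlam : lam ∈ Set.Ioc (0 : ℝ) (1/2))
    (δ : ℝ) (hδ : δ ∈ Set.Ioo (0 : ℝ) 1) :
    μ {ω | (n : ℝ)⁻¹ * ∑ i, (∫ ω', Z i ω' ∂μ) ≥
        (n : ℝ)⁻¹ * ∑ i, Z i ω + lam / n * ∑ i, Z i ω ^ 2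
          + Real.log (1 / δ) / (lam * n)} ≤ ENNReal.ofReal δ := by
  obtain ⟨lam_pos, lam_le⟩ := hlam
  let X : Fin n → Ω → ℝ := fun i ω ↦ lam * Z i ω
  have hX_indep : iIndepFun X μ := hindep.comp (fun _ z ↦ lam * z) fun _ ↦ by fun_prop
  have hX_le : ∀ i, ∀ᵐ ω ∂μ, X i ω ≤ 1 / 2 := fun i ↦ by
    filter_upwards [hZle i] with ω hω
    exact (mul_le_of_le_one_right lam_pos.le hω).trans lam_le
  have tail_bound := measureReal_sum_add_sq_add_le_sum_integral_le_exp_neg hX_indep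
    (fun i ↦ (hZint i).const_mul lam) hX_le (Real.log (1 / δ))
  have exp_neg_log : Real.exp (-Real.log (1 / δ)) = δ := by
    rw [one_div, Real.log_inv, neg_neg, Real.exp_log hδ.1]
  rw [exp_neg_log] at tail_bound
  rw [← ofReal_measureReal]
  refine ENNReal.ofReal_le_ofReal ((measureReal_mono fun ω hω ↦ ?_).trans tail_bound)
  have scaled : lam * ∑ i, Z i ω + lam ^ 2 * ∑ i, Z i ω ^ 2 + Real.log (1 / δ)
      ≤ lam * ∑ i, ∫ ω', Z i ω' ∂μ :=
    calc _ = lam * n * ((n : ℝ)⁻¹ * ∑ i, Z i ω + lam / n * ∑ i, Z i ω ^ 2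
          + Real.log (1 / δ) / (lam * n)) := by field_simp
      _ ≤ lam * n * ((n : ℝ)⁻¹ * ∑ i, ∫ ω', Z i ω' ∂μ) := by gcongr; exact hω
      _ = _ := by field_simp
  simpa only [X, integral_const_mul, mul_pow, Finset.sum_add_distrib, ← Finset.mul_sum,
    Set.mem_ofPred_eq] using scaled
end

section
/- Let Z_1, …, Z_n be independent real-valued random variables, each bounded above by 1 almost surely, and let Λ = {λ_1, …, λ_k} be a finite grid with λ_i ∈ (0, 1/2] for all i. Then for any δ ∈ (0,1), the probability that (1/n) Σ_{i=1}^n E[Z_i] ≥ (1/n) Σ_{i=1}^n Z_i + min_{λ∈Λ} ( (λ/n) Σ_{i=1}^n Z_i² + ln(k/δ)/(λn) ) is at most δ. (Unexpected Bernstein inequality.) -/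
open MeasureTheory ProbabilityTheory

/-!
If `X ≤ 1/2` almost surely, then `exp (x - x ^ 2) ≤ 1 + x` at `x = -X` shows that
`E[X] - X - X ^ 2` has exponential moment at most `exp E[X] * (1 - E[X]) ≤ 1`. For independent
variables these exponential moments multiply, so Chernoff's bound applied to the variables
`X i = l * Z i` controls the deviation for one `l`; a union bound over the grid costs the factor
`k` inside the logarithm.
-/

lemma exp_sub_sq_le_one_add {x : ℝ} (hx : -(1 / 2) ≤ x) : Real.exp (x - x ^ 2) ≤ 1 + x := by
  suffices one_le_mul_exp : 1 ≤ (1 + x) * Real.exp (x ^ 2 - x) by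
    rwa [← neg_sub, Real.exp_neg, inv_le_iff_one_le_mul₀ (Real.exp_pos _)]
  have one_add_pos : 0 < 1 + x := by linarith
  rcases le_total 0 x with x_nonneg | x_nonpos
  · calc
      1 ≤ 1 + x ^ 3 := by linarith [pow_nonneg x_nonneg 3]
      _ = (1 + x) * (x ^ 2 - x + 1) := by ring
      _ ≤ (1 + x) * Real.exp (x ^ 2 - x) := by gcongr; exact Real.add_one_le_exp _
  · have cubic_nonneg : 0 ≤ 1 + x - x ^ 2 + x ^ 3 := by nlinarith
    calc
      1 ≤ 1 + x ^ 2 * (1 + x - x ^ 2 + x ^ 3) / 2 := by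
        linarith [mul_nonneg (sq_nonneg x) cubic_nonneg]
      _ = (1 + x) * (1 + (x ^ 2 - x) + (x ^ 2 - x) ^ 2 / 2) := by ring
      _ ≤ (1 + x) * Real.exp (x ^ 2 - x) := by
        gcongr
        exact Real.quadratic_le_exp_of_nonneg (by nlinarith)

section

variable {Ω ι : Type*} {mΩ : MeasurableSpace Ω} {μ : Measure Ω}

lemma measureReal_sum_ge_le_exp_of_mgf_le_one {Y : ι → Ω → ℝ} {s : Finset ι} {t : ℝ}
    (h_indep : iIndepFun Y μ) (h_meas : ∀ i, AEMeasurable (Y i) μ) (ht : 0 ≤ t)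
    (h_int : ∀ i ∈ s, Integrable (fun ω => Real.exp (t * Y i ω)) μ)
    (h_mgf : ∀ i ∈ s, mgf (Y i) μ t ≤ 1) (ε : ℝ) :
    μ.real {ω | ε ≤ ∑ i ∈ s, Y i ω} ≤ Real.exp (-t * ε) := by
  have := h_indep.isProbabilityMeasure
  have mgf_sum := h_indep.mgf_sum₀ (t := t) h_meas s
  -- Bochner integrals of non-integrable functions vanish, so a positive `mgf` is a genuine one.
  have int_exp_sum : Integrable (fun ω => Real.exp (t * (∑ i ∈ s, Y i) ω)) μ :=
    .of_integral_ne_zero <| mgf_sum.trans_ne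
      (Finset.prod_pos fun i hi => mgf_pos (h_int i hi)).ne'
  calc μ.real {ω | ε ≤ ∑ i ∈ s, Y i ω}
      ≤ Real.exp (-t * ε) * mgf (∑ i ∈ s, Y i) μ t := by
        simpa only [Finset.sum_apply] using measure_ge_le_exp_mul_mgf ε ht int_exp_sum
    _ ≤ Real.exp (-t * ε) := by
        rw [mgf_sum]
        exact mul_le_of_le_one_right (Real.exp_pos _).le
          (Finset.prod_le_one (fun _ _ => mgf_nonneg) h_mgf)

/-- The deviation `E[X] - X` of a random variable below its mean, penalized by `X ^ 2`. The
penalty is the observed square rather than a variance; it brings the exponential moment down to at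
most `1` when `X ≤ 1/2`. -/
noncomputable def penalizedDeviation (X : Ω → ℝ) (μ : Measure Ω) (ω : Ω) : ℝ :=
  ∫ ω', X ω' ∂μ - X ω - X ω ^ 2

lemma sum_penalizedDeviation_const_mul (Z : ι → Ω → ℝ) (s : Finset ι) (l : ℝ) (ω : Ω) :
    ∑ i ∈ s, penalizedDeviation (fun ω' => l * Z i ω') μ ω =
      l * ∑ i ∈ s, ∫ ω', Z i ω' ∂μ - l * ∑ i ∈ s, Z i ω - l ^ 2 * ∑ i ∈ s, Z i ω ^ 2 := by
  simp only [penalizedDeviation, integral_const_mul, mul_pow, Finset.sum_sub_distrib,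
    Finset.mul_sum]

lemma exp_penalizedDeviation_le {X : Ω → ℝ} {ω : Ω} (hX : X ω ≤ 1 / 2) :
    Real.exp (penalizedDeviation X μ ω) ≤ Real.exp (∫ ω', X ω' ∂μ) * (1 - X ω) := by
  calc Real.exp (penalizedDeviation X μ ω)
      = Real.exp (∫ ω', X ω' ∂μ) * Real.exp (-X ω - (-X ω) ^ 2) := by
        rw [← Real.exp_add, penalizedDeviation]
        ring_nf
    _ ≤ Real.exp (∫ ω', X ω' ∂μ) * (1 - X ω) := by
        gcongr
        exact exp_sub_sq_le_one_add (by linarith)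

lemma integrable_exp_penalizedDeviation [IsFiniteMeasure μ] {X : Ω → ℝ} (hX : Integrable X μ)
    (hX_le : ∀ᵐ ω ∂μ, X ω ≤ 1 / 2) :
    Integrable (fun ω => Real.exp (penalizedDeviation X μ ω)) μ := by
  refine (((integrable_const 1).sub hX).const_mul (Real.exp (∫ ω, X ω ∂μ))).mono' ?_ ?_
  · have := hX.aemeasurable
    unfold penalizedDeviation
    fun_prop
  · filter_upwards [hX_le] with ω hω
    rw [Real.norm_eq_abs, Real.abs_exp]
    exact exp_penalizedDeviation_le hω

lemma mgf_penalizedDeviation_one_le_one [IsProbabilityMeasure μ] {X : Ω → ℝ}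
    (hX : Integrable X μ) (hX_le : ∀ᵐ ω ∂μ, X ω ≤ 1 / 2) :
    mgf (penalizedDeviation X μ) μ 1 ≤ 1 := by
  calc mgf (penalizedDeviation X μ) μ 1
      = ∫ ω, Real.exp (penalizedDeviation X μ ω) ∂μ := by simp only [mgf, one_mul]
    _ ≤ ∫ ω, Real.exp (∫ ω', X ω' ∂μ) * (1 - X ω) ∂μ :=
        integral_mono_ae (integrable_exp_penalizedDeviation hX hX_le)
          (((integrable_const 1).sub hX).const_mul _)
          (hX_le.mono fun _ => exp_penalizedDeviation_le)
    _ = Real.exp (∫ ω, X ω ∂μ) * (1 - ∫ ω, X ω ∂μ) := by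
        rw [integral_const_mul, integral_sub (integrable_const 1) hX, integral_const,
          probReal_univ, one_smul]
    _ ≤ Real.exp (∫ ω, X ω ∂μ) * Real.exp (-∫ ω, X ω ∂μ) := by
        gcongr
        exact Real.one_sub_le_exp_neg _
    _ = 1 := by rw [← Real.exp_add, add_neg_cancel, Real.exp_zero]

lemma measureReal_sum_penalizedDeviation_ge_le {X : ι → Ω → ℝ} (h_indep : iIndepFun X μ)
    (hX : ∀ i, Integrable (X i) μ) (hX_le : ∀ i, ∀ᵐ ω ∂μ, X i ω ≤ 1 / 2) (s : Finset ι) (ε : ℝ) :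
    μ.real {ω | ε ≤ ∑ i ∈ s, penalizedDeviation (X i) μ ω} ≤ Real.exp (-ε) := by
  have := h_indep.isProbabilityMeasure
  have indep_dev : iIndepFun (fun i => penalizedDeviation (X i) μ) μ :=
    h_indep.comp (fun i x => ∫ ω, X i ω ∂μ - x - x ^ 2) fun i => by fun_prop
  have meas_dev (i : ι) : AEMeasurable (penalizedDeviation (X i) μ) μ := by
    have := (hX i).aemeasurable
    unfold penalizedDeviation
    fun_prop
  simpa only [neg_mul, one_mul] using
    measureReal_sum_ge_le_exp_of_mgf_le_one indep_dev meas_dev zero_le_one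
      (fun i _ => by simpa only [one_mul] using integrable_exp_penalizedDeviation (hX i) (hX_le i))
      (fun i _ => mgf_penalizedDeviation_one_le_one (hX i) (hX_le i)) ε

lemma measureReal_biUnion_finset_le_of_le_div_card {A : ι → Set Ω} {s : Finset ι}
    (hs : s.Nonempty) {δ : ℝ} (hA : ∀ i ∈ s, μ.real (A i) ≤ δ / s.card) :
    μ.real (⋃ i ∈ s, A i) ≤ δ := by
  calc μ.real (⋃ i ∈ s, A i)
      ≤ ∑ i ∈ s, μ.real (A i) := measureReal_biUnion_finset_le s A
    _ ≤ s.card • (δ / s.card) := Finset.sum_le_card_nsmul s _ _ hA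
    _ = δ := by rw [nsmul_eq_mul, mul_div_cancel₀ _ (Nat.cast_ne_zero.mpr hs.card_ne_zero)]

lemma inv_mul_add_le_inv_mul_iff {N l : ℝ} (hN : 0 < N) (hl : 0 < l) (m s v L : ℝ) :
    N⁻¹ * s + (l / N * v + L / (l * N)) ≤ N⁻¹ * m ↔ L ≤ l * m - l * s - l ^ 2 * v := by
  have scaled : l * N * (N⁻¹ * m - (N⁻¹ * s + (l / N * v + L / (l * N)))) =
      l * m - l * s - l ^ 2 * v - L := by
    field_simp
    ring
  rw [← sub_nonneg, ← mul_nonneg_iff_of_pos_left (mul_pos hl hN), scaled, sub_nonneg]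

lemma measureReal_log_le_mul_deviation_le_inv {Z : ι → Ω → ℝ} {l a : ℝ} (h_indep : iIndepFun Z μ)
    (hZ : ∀ i, Integrable (Z i) μ) (hZ_le : ∀ i, ∀ᵐ ω ∂μ, l * Z i ω ≤ 1 / 2) (s : Finset ι)
    (ha : 0 < a) :
    μ.real {ω | Real.log a ≤
      l * ∑ i ∈ s, ∫ ω', Z i ω' ∂μ - l * ∑ i ∈ s, Z i ω - l ^ 2 * ∑ i ∈ s, Z i ω ^ 2} ≤ a⁻¹ := by
  have indep_mul : iIndepFun (fun i ω => l * Z i ω) μ :=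
    h_indep.comp (fun _ z => l * z) fun _ => by fun_prop
  simpa only [sum_penalizedDeviation_const_mul, Real.exp_neg, Real.exp_log ha] using
    measureReal_sum_penalizedDeviation_ge_le indep_mul (fun i => (hZ i).const_mul l) hZ_le s
      (Real.log a)

theorem unexpected_bernstein_general [Fintype ι] [Nonempty ι] {Z : ι → Ω → ℝ}
    (hindep : iIndepFun Z μ) (hZint : ∀ i, Integrable (Z i) μ)
    {Λ : Finset ℝ} (hΛne : Λ.Nonempty) (hΛpos : ∀ l ∈ Λ, 0 < l)
    (hΛle : ∀ l ∈ Λ, ∀ i, ∀ᵐ ω ∂μ, l * Z i ω ≤ 1 / 2) {δ : ℝ} (hδ : 0 < δ) :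
    μ {ω | (Fintype.card ι : ℝ)⁻¹ * ∑ i, (∫ ω', Z i ω' ∂μ) ≥
        (Fintype.card ι : ℝ)⁻¹ * ∑ i, Z i ω
          + Λ.inf' hΛne (fun l => l / Fintype.card ι * ∑ i, Z i ω ^ 2
              + Real.log (Λ.card / δ) / (l * Fintype.card ι))} ≤ ENNReal.ofReal δ := by
  have := hindep.isProbabilityMeasure
  have card_ι_pos : (0 : ℝ) < Fintype.card ι := Nat.cast_pos.mpr Fintype.card_pos
  have card_div_pos : 0 < Λ.card / δ := div_pos (Nat.cast_pos.mpr hΛne.card_pos) hδ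
  let exceeds (l : ℝ) : Set Ω := {ω | Real.log (Λ.card / δ) ≤
    l * ∑ i, ∫ ω', Z i ω' ∂μ - l * ∑ i, Z i ω - l ^ 2 * ∑ i, Z i ω ^ 2}
  have exceeds_le (l : ℝ) (hl : l ∈ Λ) : μ.real (exceeds l) ≤ δ / Λ.card := by
    simpa only [inv_div] using
      measureReal_log_le_mul_deviation_le_inv hindep hZint (hΛle l hl) Finset.univ card_div_pos
  refine (measure_mono (t := ⋃ l ∈ Λ, exceeds l) fun ω hω => ?_).trans ?_
  · obtain ⟨l, hl, inf_eq⟩ := Finset.exists_mem_eq_inf' hΛne fun l =>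
      l / Fintype.card ι * ∑ i, Z i ω ^ 2 + Real.log (Λ.card / δ) / (l * Fintype.card ι)
    rw [Set.mem_ofPred_eq, inf_eq, ge_iff_le,
      inv_mul_add_le_inv_mul_iff card_ι_pos (hΛpos l hl)] at hω
    exact Set.mem_biUnion hl hω
  · rw [ENNReal.le_ofReal_iff_toReal_le (measure_ne_top _ _) hδ.le]
    exact measureReal_biUnion_finset_le_of_le_div_card hΛne exceeds_le

end

/-- **Unexpected Bernstein inequality.** Let `Z_1, …, Z_n` be independent random
variables, each bounded above by 1 almost surely, and let `Λ = {λ_1, …, λ_k}` be a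
finite grid with `λᵢ ∈ (0, 1/2]`. Then for any `δ ∈ (0,1)`, with probability at most
`δ`, `(1/n) Σᵢ E[Zᵢ] ≥ (1/n) Σᵢ Zᵢ + min_{λ∈Λ} ((λ/n) Σᵢ Zᵢ² + ln(k/δ)/(λn))`. -/
theorem unexpected_bernstein
    {Ω : Type*} [MeasurableSpace Ω] (μ : Measure Ω) [IsProbabilityMeasure μ]
    (n : ℕ) (hn : 0 < n) (Z : Fin n → Ω → ℝ)
    (hZmeas : ∀ i, Measurable (Z i))
    (hindep : iIndepFun Z μ)
    (hZle : ∀ i, ∀ᵐ ω ∂μ, Z i ω ≤ 1)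
    (hZint : ∀ i, Integrable (Z i) μ)
    (Λ : Finset ℝ) (hΛne : Λ.Nonempty) (hΛ : ∀ lam ∈ Λ, lam ∈ Set.Ioc (0 : ℝ) (1/2))
    (δ : ℝ) (hδ : δ ∈ Set.Ioo (0 : ℝ) 1) :
    μ {ω | (n : ℝ)⁻¹ * ∑ i, (∫ ω', Z i ω' ∂μ) ≥
        (n : ℝ)⁻¹ * ∑ i, Z i ω
          + Λ.inf' hΛne (fun lam => lam / n * ∑ i, Z i ω ^ 2
              + Real.log (Λ.card / δ) / (lam * n))} ≤ ENNReal.ofReal δ := by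
  have : NeZero n := ⟨hn.ne'⟩
  have mul_le_half (l : ℝ) (hl : l ∈ Λ) (i : Fin n) : ∀ᵐ ω ∂μ, l * Z i ω ≤ 1 / 2 :=
    (hZle i).mono fun ω hω => (mul_le_of_le_one_right (hΛ l hl).1.le hω).trans (hΛ l hl).2
  simpa only [Fintype.card_fin] using unexpected_bernstein_general hindep hZint hΛne
    (fun l hl => (hΛ l hl).1) mul_le_half hδ.1
end
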